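/- arXiv:2109.01795 — 3 statements merged into one kernel-verified Lean document; each statement's English description precedes it below -/
import Mathlib

section
/- For any finite discounted stochastic game, a strategy profile π is a Markov perfect equilibrium if and only if it is a fixed point of the map f, i.e., f(π) = π. -/
/-!
The proof rests on the one-step deviation principle. For a profile `π` write
`T_π v = r^{i,π} + γ P^π v`, so that `V` is the fixed point of `T_π`. Since `γ < 1` and `P^π` is
stochastic, a vector with `x ≤ γ P^π x` is nonpositive (`nonpos_of_le_mulVec`); this gives
invertibility of `1 - γ P^π`, hence the Bellman equation (`V_eq_bellman`), and the comparison
principles `T_π v ≤ v → V ≤ v` and `v ≤ T_π v → v ≤ V`.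

When agent `i` switches to `σ`, `T v s` is the `σ s`-average of the action values
`actionValue π i v s b` (`bellman_update`). Comparing the deviating profile with `v = V` shows that
deviating to `b` at the single state `s` strictly improves the value iff the action value of `b`
against `V` strictly exceeds `V s` (`Vdev_le_iff`).

At an equilibrium all improvements `D` vanish, so `f π = π`. Conversely, if `f π = π`, then
`D b = π b * ∑ D` at every state. As `V s` is the `π`-average of the action values, some action `b`
with `π b > 0` has action value at most `V s`, so `D b = 0` and hence `∑ D = 0`. Thus every action
value is at most `V`, so `T_σ V ≤ V` for every deviation `σ`, and comparison gives `V_σ ≤ V`.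
-/

open Finset

/-- A finite discounted stochastic game with `n` agents, `S` states and
action counts `A i` for each agent `i`. -/
structure SG (n S : ℕ) (A : Fin n → ℕ) where
  P : Fin S → (∀ i, Fin (A i)) → Fin S → ℝ
  r : Fin n → Fin S → (∀ i, Fin (A i)) → ℝ
  Rmax : ℝ
  γ : ℝ
  P_nonneg : ∀ s a s', 0 ≤ P s a s'
  P_sum_one : ∀ s a, ∑ s', P s a s' = 1
  r_nonneg : ∀ i s a, 0 ≤ r i s a
  r_le_Rmax : ∀ i s a, r i s a ≤ Rmax
  γ_nonneg : 0 ≤ γ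
  γ_lt_one : γ < 1

namespace SG

variable {n S : ℕ} {A : Fin n → ℕ}

/-- A (behavioral) strategy profile: agent `i` plays at state `s` the distribution
`π i s` on its actions. -/
abbrev Profile (n S : ℕ) (A : Fin n → ℕ) := ∀ i : Fin n, Fin S → Fin (A i) → ℝ

/-- `π` is a genuine strategy profile: each `π i s` is a probability distribution. -/
def IsProfile (π : Profile n S A) : Prop :=
  (∀ i s a, 0 ≤ π i s a) ∧ ∀ i s, ∑ a, π i s a = 1

/-- `A_max`, the largest number of actions of any agent. -/
def Amax (A : Fin n → ℕ) : ℕ := Finset.univ.sup A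

/-- Probability of the joint action `a` at state `s` under profile `π`. -/
def jointProb (π : Profile n S A) (s : Fin S) (a : ∀ i, Fin (A i)) : ℝ :=
  ∏ i, π i s (a i)

/-- The state-transition matrix `P^π` induced by the profile `π`. -/
noncomputable def Pmat (g : SG n S A) (π : Profile n S A) : Matrix (Fin S) (Fin S) ℝ :=
  fun s s' => ∑ a, jointProb π s a * g.P s a s'

/-- Expected one-step reward `r^{i,π}(s)` of agent `i` at state `s` under `π`. -/
noncomputable def rvec (g : SG n S A) (π : Profile n S A) (i : Fin n) (s : Fin S) : ℝ :=
  ∑ a, jointProb π s a * g.r i s a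

/-- The value function `V^{π^i,π^{-i}}` of agent `i` under profile `π`: the unique
solution of the Bellman equation `V = r^{i,π} + γ P^π V`, i.e. `(I − γP^π)⁻¹ r^{i,π}`. -/
noncomputable def V (g : SG n S A) (π : Profile n S A) (i : Fin n) : Fin S → ℝ :=
  Matrix.mulVec (1 - g.γ • g.Pmat π)⁻¹ (g.rvec π i)

/-- The profile obtained from `π` by letting agent `i` play the pure action `a`
at state `s` (and `π i` at every other state). -/
def devProfile (π : Profile n S A) (i : Fin n) (s : Fin S) (a : Fin (A i)) : Profile n S A :=
  Function.update π i (fun t b => if t = s then (if b = a then (1 : ℝ) else 0) else π i t b)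

/-- The one-step-deviation value `V^{π^i,π^{-i}}_{π^i(s,a)=1}(s)`. -/
noncomputable def Vdev (g : SG n S A) (π : Profile n S A) (i : Fin n) (s : Fin S)
    (a : Fin (A i)) : ℝ :=
  g.V (devProfile π i s a) i s

/-- `D^{π}_{a}(s) = max(0, V^{π^i,π^{-i}}_{π^i(s,a)=1}(s) − V^{π^i,π^{-i}}(s))`. -/
noncomputable def D (g : SG n S A) (π : Profile n S A) (i : Fin n) (s : Fin S)
    (a : Fin (A i)) : ℝ :=
  max 0 (g.Vdev π i s a - g.V π i s)

/-- Nash's improvement map `f` on strategy profiles. -/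
noncomputable def f (g : SG n S A) (π : Profile n S A) : Profile n S A :=
  fun i s a => (π i s a + g.D π i s a) / (1 + ∑ b, g.D π i s b)

/-- `π` is a Markov perfect equilibrium: no agent can improve its value at any state
by unilaterally switching to another behavioral strategy. -/
def IsMPE (g : SG n S A) (π : Profile n S A) : Prop :=
  ∀ (s : Fin S) (i : Fin n) (σ : Fin S → Fin (A i) → ℝ),
    ((∀ t b, 0 ≤ σ t b) ∧ ∀ t, ∑ b, σ t b = 1) →
    g.V (Function.update π i σ) i s ≤ g.V π i s

/-- `π` is an `ε`-approximate Markov perfect equilibrium. -/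
def IsApproxMPE (g : SG n S A) (π : Profile n S A) (ε : ℝ) : Prop :=
  ∀ (s : Fin S) (i : Fin n) (σ : Fin S → Fin (A i) → ℝ),
    ((∀ t b, 0 ≤ σ t b) ∧ ∀ t, ∑ b, σ t b = 1) →
    g.V (Function.update π i σ) i s - ε ≤ g.V π i s

end SG

namespace SG

variable {n S : ℕ} {A : Fin n → ℕ}

/-! ### The Bellman operator and stochastic transition matrices -/

/-- The Bellman operator `v ↦ r^{i,π} + γ P^π v`, written as one expectation over joint actions. -/
noncomputable def bellman (g : SG n S A) (π : Profile n S A) (i : Fin n) (v : Fin S → ℝ)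
    (s : Fin S) : ℝ :=
  ∑ a, jointProb π s a * (g.r i s a + g.γ * ∑ s', g.P s a s' * v s')

/-- The value to agent `i` of playing the action `b` at `s` against the other agents' strategies,
with continuation values `v`. Agent `i`'s own strategy does not enter. -/
noncomputable def actionValue (g : SG n S A) (π : Profile n S A) (i : Fin n) (v : Fin S → ℝ)
    (s : Fin S) (b : Fin (A i)) : ℝ :=
  ∑ a : ∀ j, Fin (A j), (if a i = b then 1 else 0) *
    ((∏ j ∈ univ.erase i, π j s (a j)) * (g.r i s a + g.γ * ∑ s', g.P s a s' * v s'))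

lemma jointProb_nonneg {π : Profile n S A} (hπ : IsProfile π) (s : Fin S)
    (a : ∀ i, Fin (A i)) : 0 ≤ jointProb π s a :=
  Finset.prod_nonneg fun i _ => hπ.1 i s (a i)

lemma jointProb_sum {π : Profile n S A} (hπ : IsProfile π) (s : Fin S) :
    ∑ a, jointProb π s a = 1 := by
  have h := Fintype.prod_sum (fun (i : Fin n) (b : Fin (A i)) => π i s b)
  simp only [hπ.2, Finset.prod_const_one] at h
  exact h.symm

lemma Pmat_nonneg (g : SG n S A) {π : Profile n S A} (hπ : IsProfile π) (s s' : Fin S) :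
    0 ≤ g.Pmat π s s' :=
  Finset.sum_nonneg fun a _ => mul_nonneg (jointProb_nonneg hπ s a) (g.P_nonneg s a s')

lemma Pmat_sum (g : SG n S A) {π : Profile n S A} (hπ : IsProfile π) (s : Fin S) :
    ∑ s', g.Pmat π s s' = 1 := by
  unfold Pmat
  rw [Finset.sum_comm]
  simp only [← Finset.mul_sum, g.P_sum_one, mul_one]
  exact jointProb_sum hπ s

lemma bellman_eq (g : SG n S A) (π : Profile n S A) (i : Fin n) (v : Fin S → ℝ) (s : Fin S) :
    g.bellman π i v s = g.rvec π i s + g.γ * ∑ s', g.Pmat π s s' * v s' := by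
  simp only [bellman, rvec, Pmat, mul_add, Finset.sum_add_distrib, Finset.sum_mul]
  congr 1
  rw [Finset.sum_comm, Finset.mul_sum]
  refine Finset.sum_congr rfl fun a _ => ?_
  simp only [Finset.mul_sum]
  refine Finset.sum_congr rfl fun s' _ => ?_
  ring

/-! ### Maximum principle, Bellman equation and comparison -/

/-- Maximum principle: evaluate the inequality at a state where `x` is maximal. -/
lemma nonpos_of_le_mulVec (g : SG n S A) {π : Profile n S A} (hπ : IsProfile π)
    (x : Fin S → ℝ) (hx : ∀ s, x s ≤ g.γ * ∑ s', g.Pmat π s s' * x s') (s : Fin S) :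
    x s ≤ 0 := by
  obtain ⟨m, -, hm⟩ := Finset.exists_max_image univ x ⟨s, mem_univ s⟩
  have h1 : ∑ s', g.Pmat π m s' * x s' ≤ x m := by
    calc ∑ s', g.Pmat π m s' * x s' ≤ ∑ s', g.Pmat π m s' * x m :=
          Finset.sum_le_sum fun s' _ =>
            mul_le_mul_of_nonneg_left (hm s' (mem_univ _)) (g.Pmat_nonneg hπ m s')
      _ = x m := by rw [← Finset.sum_mul, g.Pmat_sum hπ, one_mul]
  have h2 := mul_le_mul_of_nonneg_left h1 g.γ_nonneg
  have h3 := hx m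
  have h4 := hm s (mem_univ _)
  have h5 := g.γ_lt_one
  by_contra! h
  nlinarith

lemma one_sub_mulVec (g : SG n S A) (π : Profile n S A) (x : Fin S → ℝ) (s : Fin S) :
    Matrix.mulVec (1 - g.γ • g.Pmat π) x s = x s - g.γ * ∑ s', g.Pmat π s s' * x s' := by
  rw [Matrix.sub_mulVec, Matrix.one_mulVec, Matrix.smul_mulVec]
  rfl

lemma isUnit_one_sub (g : SG n S A) {π : Profile n S A} (hπ : IsProfile π) :
    IsUnit (1 - g.γ • g.Pmat π) := by
  rw [← Matrix.mulVec_injective_iff_isUnit]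
  intro x y hxy
  have key : ∀ s, x s - y s = g.γ * ∑ s', g.Pmat π s s' * (x s' - y s') := by
    intro s
    have h := congrFun hxy s
    rw [one_sub_mulVec, one_sub_mulVec] at h
    simp only [mul_sub, Finset.sum_sub_distrib]
    linarith
  ext s
  have h1 := g.nonpos_of_le_mulVec hπ (fun s => x s - y s) (fun s => (key s).le) s
  have h2 := g.nonpos_of_le_mulVec hπ (fun s => -(x s - y s)) (fun s => by
    simp only [mul_neg, Finset.sum_neg_distrib]
    exact (neg_le_neg (key s).ge)) s
  linarith

lemma V_eq_bellman (g : SG n S A) {π : Profile n S A} (hπ : IsProfile π) (i : Fin n)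
    (s : Fin S) : g.V π i s = g.bellman π i (g.V π i) s := by
  have h : Matrix.mulVec (1 - g.γ • g.Pmat π) (g.V π i) = g.rvec π i := by
    rw [V, Matrix.mulVec_mulVec, Matrix.mul_nonsing_inv _
      ((Matrix.isUnit_iff_isUnit_det _).1 (g.isUnit_one_sub hπ)), Matrix.one_mulVec]
  have hs := congrFun h s
  rw [one_sub_mulVec] at hs
  rw [bellman_eq]
  linarith

lemma bellman_mono (g : SG n S A) {π : Profile n S A} (hπ : IsProfile π) (i : Fin n)
    {v w : Fin S → ℝ} (h : ∀ s, v s ≤ w s) (s : Fin S) :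
    g.bellman π i v s ≤ g.bellman π i w s := by
  rw [bellman_eq, bellman_eq]
  have := Finset.sum_le_sum fun s' (_ : s' ∈ univ) =>
    mul_le_mul_of_nonneg_left (h s') (g.Pmat_nonneg hπ s s')
  have := mul_le_mul_of_nonneg_left this g.γ_nonneg
  linarith

lemma V_le_of_bellman_le (g : SG n S A) {π : Profile n S A} (hπ : IsProfile π) (i : Fin n)
    {v : Fin S → ℝ} (h : ∀ s, g.bellman π i v s ≤ v s) (s : Fin S) : g.V π i s ≤ v s := by
  have := g.nonpos_of_le_mulVec hπ (fun s => g.V π i s - v s) (fun s => by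
    have h1 := g.V_eq_bellman hπ i s
    have h2 := h s
    rw [bellman_eq] at h1 h2
    simp only [mul_sub, Finset.sum_sub_distrib]
    linarith) s
  linarith

lemma le_V_of_le_bellman (g : SG n S A) {π : Profile n S A} (hπ : IsProfile π) (i : Fin n)
    {v : Fin S → ℝ} (h : ∀ s, v s ≤ g.bellman π i v s) (s : Fin S) : v s ≤ g.V π i s := by
  have := g.nonpos_of_le_mulVec hπ (fun s => v s - g.V π i s) (fun s => by
    have h1 := g.V_eq_bellman hπ i s
    have h2 := h s
    rw [bellman_eq] at h1 h2
    simp only [mul_sub, Finset.sum_sub_distrib]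
    linarith) s
  linarith

/-! ### Unilateral deviations -/

/-- The Bellman operator is affine in agent `i`'s mixed action at the current state. -/
lemma bellman_update (g : SG n S A) (π : Profile n S A) (i : Fin n)
    (σ : Fin S → Fin (A i) → ℝ) (v : Fin S → ℝ) (s : Fin S) :
    g.bellman (Function.update π i σ) i v s = ∑ b, σ s b * g.actionValue π i v s b := by
  simp only [actionValue, Finset.mul_sum (s := (univ : Finset (∀ j, Fin (A j))))]
  rw [Finset.sum_comm]
  refine Finset.sum_congr rfl fun a _ => ?_
  have h1 : jointProb (Function.update π i σ) s a
      = σ s (a i) * ∏ j ∈ univ.erase i, π j s (a j) := by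
    rw [jointProb, ← Finset.mul_prod_erase _ _ (mem_univ i), Function.update_self]
    congr 1
    refine Finset.prod_congr rfl fun j hj => ?_
    rw [Function.update_of_ne (Finset.ne_of_mem_erase hj)]
  simp [h1, mul_assoc]

lemma bellman_self (g : SG n S A) (π : Profile n S A) (i : Fin n) (v : Fin S → ℝ) (s : Fin S) :
    g.bellman π i v s = ∑ b, π i s b * g.actionValue π i v s b := by
  rw [← bellman_update, Function.update_eq_self]

lemma isProfile_update {π : Profile n S A} (hπ : IsProfile π) (i : Fin n)
    (σ : Fin S → Fin (A i) → ℝ) (hσ : (∀ t b, 0 ≤ σ t b) ∧ ∀ t, ∑ b, σ t b = 1) :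
    IsProfile (Function.update π i σ) := by
  refine ⟨fun j => ?_, fun j => ?_⟩ <;> rcases eq_or_ne j i with rfl | hj
  · simpa using hσ.1
  · simpa [hj] using hπ.1 j
  · simpa using hσ.2
  · simpa [hj] using hπ.2 j

lemma pureAt_isStrategy {π : Profile n S A} (hπ : IsProfile π) (i : Fin n) (s : Fin S)
    (a : Fin (A i)) :
    (∀ t b, 0 ≤ (fun t b => if t = s then (if b = a then (1 : ℝ) else 0) else π i t b :
      Fin S → Fin (A i) → ℝ) t b) ∧
    ∀ t, ∑ b, (fun t b => if t = s then (if b = a then (1 : ℝ) else 0) else π i t b :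
      Fin S → Fin (A i) → ℝ) t b = 1 := by
  refine ⟨fun t b => ?_, fun t => ?_⟩
  · dsimp only
    split_ifs
    exacts [zero_le_one, le_rfl, hπ.1 i t b]
  · by_cases h : t = s
    · simp [h]
    · simpa [h] using hπ.2 i t

lemma bellman_dev_self (g : SG n S A) (π : Profile n S A) (i : Fin n) (s : Fin S)
    (a : Fin (A i)) (v : Fin S → ℝ) :
    g.bellman (devProfile π i s a) i v s = g.actionValue π i v s a := by
  simp [devProfile, bellman_update]

lemma bellman_dev_of_ne (g : SG n S A) (π : Profile n S A) (i : Fin n) {s t : Fin S}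
    (a : Fin (A i)) (v : Fin S → ℝ) (h : t ≠ s) :
    g.bellman (devProfile π i s a) i v t = g.bellman π i v t := by
  rw [bellman_self g π]
  simp [devProfile, bellman_update, h]

/-- The full value of a deviation at a single state and its one-step action value against `V`
lie on the same side of `V`. -/
lemma Vdev_le_iff (g : SG n S A) {π : Profile n S A} (hπ : IsProfile π) (i : Fin n) (s : Fin S)
    (a : Fin (A i)) :
    g.Vdev π i s a ≤ g.V π i s ↔ g.actionValue π i (g.V π i) s a ≤ g.V π i s := by
  have hδ : IsProfile (devProfile π i s a) := isProfile_update hπ i _ (pureAt_isStrategy hπ i s a)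
  constructor
  · contrapose!
    intro h
    have hle : ∀ t, g.V π i t ≤ g.bellman (devProfile π i s a) i (g.V π i) t := by
      intro t
      rcases eq_or_ne t s with rfl | ht
      · rw [bellman_dev_self]
        exact h.le
      · rw [bellman_dev_of_ne g π i a _ ht, ← g.V_eq_bellman hπ]
    have hV := g.le_V_of_le_bellman hδ i hle
    calc g.V π i s < g.actionValue π i (g.V π i) s a := h
      _ = g.bellman (devProfile π i s a) i (g.V π i) s := (g.bellman_dev_self π i s a _).symm
      _ ≤ g.bellman (devProfile π i s a) i (g.V (devProfile π i s a) i) s :=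
        g.bellman_mono hδ i hV s
      _ = g.Vdev π i s a := (g.V_eq_bellman hδ i s).symm
  · intro h
    refine g.V_le_of_bellman_le hδ i (fun t => ?_) s
    rcases eq_or_ne t s with rfl | ht
    · rw [bellman_dev_self]
      exact h
    · rw [bellman_dev_of_ne g π i a _ ht, ← g.V_eq_bellman hπ]

/-! ### Improvements -/

lemma D_nonneg (g : SG n S A) (π : Profile n S A) (i : Fin n) (s : Fin S) (a : Fin (A i)) :
    0 ≤ g.D π i s a := le_max_left _ _

lemma D_eq_zero_iff (g : SG n S A) (π : Profile n S A) (i : Fin n) (s : Fin S) (a : Fin (A i)) :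
    g.D π i s a = 0 ↔ g.Vdev π i s a ≤ g.V π i s := by
  rw [D, max_eq_left_iff, sub_nonpos]

/-- `V s` is the `π`-average of the action values, so not every action in the support of
`π i s` can strictly improve on it. -/
lemma exists_support_D_eq_zero (g : SG n S A) {π : Profile n S A} (hπ : IsProfile π) (i : Fin n)
    (s : Fin S) : ∃ b, 0 < π i s b ∧ g.D π i s b = 0 := by
  by_contra! h
  have h' : ∀ b, 0 < π i s b → g.V π i s < g.actionValue π i (g.V π i) s b := fun b hb => by
    have := h b hb
    rwa [Ne, D_eq_zero_iff, g.Vdev_le_iff hπ, not_le] at this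
  obtain ⟨b, hb⟩ : ∃ b, 0 < π i s b := by
    by_contra! hc
    have := Finset.sum_nonpos fun b (_ : b ∈ univ) => hc b
    rw [hπ.2 i s] at this
    linarith
  have hlt : ∑ b, π i s b * g.V π i s < ∑ b, π i s b * g.actionValue π i (g.V π i) s b := by
    refine Finset.sum_lt_sum (fun c _ => ?_) ⟨b, mem_univ b, mul_lt_mul_of_pos_left (h' b hb) hb⟩
    rcases (hπ.1 i s c).eq_or_lt with hc | hc
    · simp [← hc]
    · exact mul_le_mul_of_nonneg_left (h' c hc).le hc.le
  rw [← Finset.sum_mul, hπ.2 i s, one_mul, ← bellman_self, ← g.V_eq_bellman hπ] at hlt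
  exact lt_irrefl _ hlt

end SG

open SG in
/-- `π` is a Markov perfect equilibrium iff it is a fixed point of `f`. -/
theorem isMPE_iff_isFixedPt {n S : ℕ} {A : Fin n → ℕ} (g : SG n S A)
    (π : Profile n S A) (hπ : IsProfile π) :
    g.IsMPE π ↔ g.f π = π := by
  constructor
  · intro h
    have hD : ∀ i s a, g.D π i s a = 0 := fun i s a =>
      (g.D_eq_zero_iff π i s a).2 (h s i _ (pureAt_isStrategy hπ i s a))
    funext i s a
    simp [f, hD]
  · intro h s i σ hσ
    have hD : ∀ t b, g.D π i t b = 0 := by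
      intro t
      obtain ⟨c, hc, hDc⟩ := g.exists_support_D_eq_zero hπ i t
      have hsum : 0 ≤ ∑ b, g.D π i t b := Finset.sum_nonneg fun b _ => g.D_nonneg π i t b
      have hfix : (π i t c + g.D π i t c) / (1 + ∑ b, g.D π i t b) = π i t c :=
        congrFun (congrFun (congrFun h i) t) c
      rw [hDc, div_eq_iff (by linarith)] at hfix
      have hzero : ∑ b, g.D π i t b = 0 := by
        have : π i t c * ∑ b, g.D π i t b = 0 := by linarith
        exact (mul_eq_zero.1 this).resolve_left hc.ne'
      intro b
      exact (Finset.sum_eq_zero_iff_of_nonneg fun b _ => g.D_nonneg π i t b).1 hzero b (mem_univ b)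
    refine g.V_le_of_bellman_le (isProfile_update hπ i σ hσ) i (fun t => ?_) s
    rw [bellman_update]
    calc ∑ b, σ t b * g.actionValue π i (g.V π i) t b ≤ ∑ b, σ t b * g.V π i t :=
          Finset.sum_le_sum fun b _ => mul_le_mul_of_nonneg_left
            ((g.Vdev_le_iff hπ i t b).1 ((g.D_eq_zero_iff π i t b).1 (hD t b))) (hσ.1 t b)
      _ = g.V π i t := by rw [← Finset.sum_mul, hσ.2, one_mul]
end

section
/- Let ε > 0 and let π be a (not necessarily deterministic) stationary policy of a finite discounted Markov decision process. If for each state s and each action a, max(0, V^π_{π(s,a)=1}(s) − V^π(s)) ≤ ε, where V^π_{π(s,a)=1}(s) is the value at s of the policy that plays a deterministically at s and π elsewhere, then for every state s the optimal value V*(s) satisfies V*(s) − V^π(s) ≤ ε/(1−γ), i.e., π is an ε/(1−γ)-approximately optimal policy. -/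
/-!
Write `Q(s,a) = r(s,a) + γ ∑ P(s'|s,a) V^π(s')`. Everything rests on a maximum principle
(`le_of_le_avg`): if at every state `D` is at most `c` plus `γ` times some average of `D`, then
evaluating at a maximiser of `D` gives `D ≤ c / (1 - γ)`.

* With `c = 0` it shows that `I - γ P^π` is injective, hence invertible, so that the matrix
  formula for `V^π` really satisfies the Bellman equation (`bellman`).
* The difference `D = V^{dev} - V^π` satisfies `D = δ e_s + γ P^{dev} D`, where
  `δ = Q(s,a) - V^π(s)`. If `δ ≥ 0`, the principle applied to `-D` gives `D ≥ 0`, hence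
  `D(s) ≥ δ`. So a value gain of at most `ε` forces `Q(s,a) ≤ V^π(s) + ε`.
* At each state choose an action attaining the maximum in the optimality equation. Then
  `V* - V^π` is at most `ε` plus `γ` times its own average, and the principle with `c = ε`
  concludes.
-/

open Finset

/-- A finite discounted Markov decision process with `S` states and `A` actions. -/
structure MDP (S A : ℕ) where
  P : Fin S → Fin A → Fin S → ℝ
  r : Fin S → Fin A → ℝ
  Rmax : ℝ
  γ : ℝ
  P_nonneg : ∀ s a s', 0 ≤ P s a s'
  P_sum_one : ∀ s a, ∑ s', P s a s' = 1
  r_nonneg : ∀ s a, 0 ≤ r s a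
  r_le_Rmax : ∀ s a, r s a ≤ Rmax
  γ_nonneg : 0 ≤ γ
  γ_lt_one : γ < 1

namespace MDP

variable {S A : ℕ}

/-- A stationary (not necessarily deterministic) policy. -/
def IsPolicy (π : Fin S → Fin A → ℝ) : Prop :=
  (∀ s a, 0 ≤ π s a) ∧ ∀ s, ∑ a, π s a = 1

/-- The state-transition matrix induced by the policy `π`. -/
noncomputable def Pmat (m : MDP S A) (π : Fin S → Fin A → ℝ) : Matrix (Fin S) (Fin S) ℝ :=
  fun s s' => ∑ a, π s a * m.P s a s'

/-- The expected one-step reward under `π`. -/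
noncomputable def rvec (m : MDP S A) (π : Fin S → Fin A → ℝ) (s : Fin S) : ℝ :=
  ∑ a, π s a * m.r s a

/-- The value function `V^π`: the unique solution of the Bellman equation
`V = r^π + γP^πV`, i.e. `(I − γP^π)⁻¹ r^π`. -/
noncomputable def V (m : MDP S A) (π : Fin S → Fin A → ℝ) : Fin S → ℝ :=
  Matrix.mulVec (1 - m.γ • m.Pmat π)⁻¹ (m.rvec π)

/-- The policy that plays `a` deterministically at `s` and `π` elsewhere. -/
def devPolicy (π : Fin S → Fin A → ℝ) (s : Fin S) (a : Fin A) : Fin S → Fin A → ℝ :=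
  fun t b => if t = s then (if b = a then 1 else 0) else π t b

/-- Maximum principle for `γ`-discounted averages; the averaging weights `p s` may depend on the
state in any way. -/
lemma le_of_le_avg {γ c : ℝ} (h0 : 0 ≤ γ) (h1 : γ < 1) (p : Fin S → Fin S → ℝ)
    (hp : ∀ s t, 0 ≤ p s t) (hp1 : ∀ s, ∑ t, p s t = 1) (D : Fin S → ℝ)
    (hD : ∀ s, D s ≤ c + γ * ∑ t, p s t * D t) (s : Fin S) : D s ≤ c / (1 - γ) := by
  haveI : Nonempty (Fin S) := ⟨s⟩
  obtain ⟨x, hx⟩ := Finite.exists_max D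
  have h2 : ∑ t, p x t * D t ≤ D x := by
    calc ∑ t, p x t * D t ≤ ∑ t, p x t * D x :=
          Finset.sum_le_sum fun t _ => mul_le_mul_of_nonneg_left (hx t) (hp x t)
      _ = D x := by rw [← Finset.sum_mul, hp1, one_mul]
  have h3 := mul_le_mul_of_nonneg_left h2 h0
  have h4 := hD x
  refine (hx s).trans ?_
  rw [le_div_iff₀ (by linarith)]
  linarith

lemma Pmat_nonneg (m : MDP S A) {π : Fin S → Fin A → ℝ} (hπ : IsPolicy π) (s t : Fin S) :
    0 ≤ m.Pmat π s t :=
  Finset.sum_nonneg fun a _ => mul_nonneg (hπ.1 s a) (m.P_nonneg s a t)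

lemma Pmat_sum (m : MDP S A) {π : Fin S → Fin A → ℝ} (hπ : IsPolicy π) (s : Fin S) :
    ∑ t, m.Pmat π s t = 1 := by
  unfold Pmat
  rw [Finset.sum_comm]
  simp_rw [← Finset.mul_sum, m.P_sum_one, mul_one]
  exact hπ.2 s

lemma mulVec_apply (m : MDP S A) (π : Fin S → Fin A → ℝ) (v : Fin S → ℝ) (s : Fin S) :
    Matrix.mulVec (1 - m.γ • m.Pmat π) v s = v s - m.γ * ∑ t, m.Pmat π s t * v t := by
  rw [Matrix.sub_mulVec, Matrix.one_mulVec, Matrix.smul_mulVec]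
  simp [Matrix.mulVec, dotProduct]

/-- The matrix inverse in the definition of `V` is a genuine one. -/
lemma isUnit_mat (m : MDP S A) {π : Fin S → Fin A → ℝ} (hπ : IsPolicy π) :
    IsUnit (1 - m.γ • m.Pmat π) := by
  have key : ∀ v, Matrix.mulVec (1 - m.γ • m.Pmat π) v = 0 → ∀ s, v s ≤ 0 := by
    intro v hv s
    have := le_of_le_avg (c := 0) m.γ_nonneg m.γ_lt_one (m.Pmat π) (m.Pmat_nonneg hπ)
      (m.Pmat_sum hπ) v (fun t => by
        have h := congrFun hv t
        rw [mulVec_apply, Pi.zero_apply] at h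
        linarith) s
    simpa using this
  rw [← Matrix.mulVec_injective_iff_isUnit]
  intro v w hvw
  have hvw' : Matrix.mulVec (1 - m.γ • m.Pmat π) v = Matrix.mulVec (1 - m.γ • m.Pmat π) w := hvw
  funext s
  have h1 := key (v - w) (by rw [Matrix.mulVec_sub, hvw', sub_self]) s
  have h2 := key (w - v) (by rw [Matrix.mulVec_sub, hvw', sub_self]) s
  simp only [Pi.sub_apply] at h1 h2
  linarith

lemma bellman (m : MDP S A) {π : Fin S → Fin A → ℝ} (hπ : IsPolicy π) (s : Fin S) :
    m.V π s = m.rvec π s + m.γ * ∑ t, m.Pmat π s t * m.V π t := by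
  have h : Matrix.mulVec (1 - m.γ • m.Pmat π) (m.V π) = m.rvec π := by
    unfold V
    rw [Matrix.mulVec_mulVec, Matrix.mul_nonsing_inv _
      ((Matrix.isUnit_iff_isUnit_det _).1 (m.isUnit_mat hπ)), Matrix.one_mulVec]
  have h' := congrFun h s
  rw [mulVec_apply] at h'
  linarith

lemma isPolicy_dev {π : Fin S → Fin A → ℝ} (hπ : IsPolicy π) (s : Fin S) (a : Fin A) :
    IsPolicy (devPolicy π s a) := by
  constructor
  · intro t b
    unfold devPolicy
    split_ifs
    · exact zero_le_one
    · exact le_rfl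
    · exact hπ.1 t b
  · intro t
    by_cases h : t = s
    · simp [devPolicy, h]
    · simpa [devPolicy, h] using hπ.2 t

/-- A deviation that is profitable when played once is at least as profitable when played at every
visit to `s`. -/
lemma one_step_le (m : MDP S A) {π : Fin S → Fin A → ℝ} (hπ : IsPolicy π) (s : Fin S) (a : Fin A)
    (hδ : m.V π s ≤ m.r s a + m.γ * ∑ t, m.P s a t * m.V π t) :
    m.r s a + m.γ * ∑ t, m.P s a t * m.V π t ≤ m.V (devPolicy π s a) s := by
  have hd := isPolicy_dev hπ s a
  have hPs : ∀ t, m.Pmat (devPolicy π s a) s t = m.P s a t := fun t => by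
    simp [Pmat, devPolicy]
  have hrs : m.rvec (devPolicy π s a) s = m.r s a := by simp [rvec, devPolicy]
  have hBs := m.bellman hd s
  simp only [hPs, hrs] at hBs
  have hle : ∀ t, m.V π t - m.V (devPolicy π s a) t ≤ 0 := by
    intro t
    have := le_of_le_avg (c := 0) m.γ_nonneg m.γ_lt_one (m.Pmat (devPolicy π s a))
      (m.Pmat_nonneg hd) (m.Pmat_sum hd) (fun t => m.V π t - m.V (devPolicy π s a) t)
      (fun t => by
        simp only [mul_sub, Finset.sum_sub_distrib]
        by_cases h : t = s
        · subst h
          simp only [hPs]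
          linarith
        · have hP : ∀ u, m.Pmat (devPolicy π s a) t u = m.Pmat π t u := fun u => by
            simp [Pmat, devPolicy, h]
          have hr : m.rvec (devPolicy π s a) t = m.rvec π t := by simp [rvec, devPolicy, h]
          have h1 := m.bellman hd t
          have h2 := m.bellman hπ t
          simp only [hP, hr] at h1 ⊢
          linarith) t
    simpa using this
  have hmono : ∑ t, m.P s a t * m.V π t ≤ ∑ t, m.P s a t * m.V (devPolicy π s a) t :=
    Finset.sum_le_sum fun t _ =>
      mul_le_mul_of_nonneg_left (by linarith [hle t]) (m.P_nonneg s a t)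
  have := mul_le_mul_of_nonneg_left hmono m.γ_nonneg
  linarith

/-- if one-step deviations improve the value of `π` by at most `ε`,
then `π` is `ε/(1−γ)`-approximately optimal: `V*(s) − V^π(s) ≤ ε/(1−γ)` where `V*`
is the (unique) solution of the Bellman optimality equation. -/
theorem approx_optimal_of_one_step (m : MDP S A) (hA : 0 < A)
    (π : Fin S → Fin A → ℝ) (hπ : IsPolicy π)
    (ε : ℝ) (hε : 0 < ε)
    (hdev : ∀ s a, max 0 (m.V (devPolicy π s a) s - m.V π s) ≤ ε)
    (Vstar : Fin S → ℝ)
    (hstar : ∀ s, Vstar s =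
      Finset.univ.sup' (Finset.univ_nonempty_iff.mpr ⟨⟨0, hA⟩⟩)
        (fun a => m.r s a + m.γ * ∑ s', m.P s a s' * Vstar s')) :
    ∀ s, Vstar s - m.V π s ≤ ε / (1 - m.γ) := by
  have hQ : ∀ s a, m.r s a + m.γ * ∑ t, m.P s a t * m.V π t ≤ m.V π s + ε := by
    intro s a
    rcases le_total (m.V π s) (m.r s a + m.γ * ∑ t, m.P s a t * m.V π t) with h | h
    · have h1 := m.one_step_le hπ s a h
      have h2 := (le_max_right _ _).trans (hdev s a)
      linarith
    · linarith
  -- an action attaining the maximum in the optimality equation at each state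
  have hex : ∀ s, ∃ a, Vstar s = m.r s a + m.γ * ∑ s', m.P s a s' * Vstar s' := by
    intro s
    obtain ⟨a, -, ha⟩ := Finset.exists_mem_eq_sup' (Finset.univ_nonempty_iff.mpr ⟨⟨0, hA⟩⟩)
      (fun a => m.r s a + m.γ * ∑ s', m.P s a s' * Vstar s')
    exact ⟨a, (hstar s).trans ha⟩
  choose f hf using hex
  refine le_of_le_avg m.γ_nonneg m.γ_lt_one (fun s => m.P s (f s))
    (fun s => m.P_nonneg s (f s)) (fun s => m.P_sum_one s (f s)) (fun s => Vstar s - m.V π s) ?_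
  intro s
  have h1 := hf s
  have h2 := hQ s (f s)
  simp only [mul_sub, Finset.sum_sub_distrib]
  linarith

end MDP
end

section
/- Let π₁, π₂ be strategy profiles of a finite discounted stochastic game with ‖π₁ − π₂‖∞ ≤ δ. Then for all states s, s' ∈ 𝕊, the entries of the inverse matrices satisfy |(I − γP^{π₁})^{-1}(s'|s) − (I − γP^{π₂})^{-1}(s'|s)| ≤ nSA_max δ/(1−γ)². -/
/-!
The proof works in the `ℓ∞` operator norm on matrices (the largest absolute row sum). Write
`Xⱼ = (I - γP^{πⱼ})⁻¹`. Since `P^{πⱼ}` is stochastic it has norm at most `1`, so `I - γP^{πⱼ}` is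
invertible and `‖Xⱼ‖ ≤ 1 / (1 - γ)` (`isUnit_and_norm_inv_le`). The resolvent identity
`X₁ - X₂ = X₁ (γ (P^{π₁} - P^{π₂})) X₂` reduces the claim to `‖P^{π₁} - P^{π₂}‖ ≤ n A_max δ`.
A row of this difference has `ℓ¹` norm at most that of the difference of the joint action
distributions. These are product distributions, so exchanging one agent at a time bounds their
distance by the sum over the agents of `ℓ¹` distances (`sum_abs_prod_sub_prod_le`), each of
which is at most `A_max δ`. The resulting bound on the norm dominates every entry, and it is
better than the required one by the factor `S ≥ 1`.
-/

open Finset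

/-- Hybrid argument: the `ℓ¹` distance between two product distributions is at most the sum of
the `ℓ¹` distances between their factors. -/
lemma sum_abs_prod_sub_prod_le : ∀ {n : ℕ} {A : Fin n → ℕ} (p q : ∀ i, Fin (A i) → ℝ),
    (∀ i b, 0 ≤ p i b) → (∀ i, ∑ b, p i b = 1) →
    (∀ i b, 0 ≤ q i b) → (∀ i, ∑ b, q i b = 1) →
    ∑ a : ∀ i, Fin (A i), |∏ i, p i (a i) - ∏ i, q i (a i)| ≤ ∑ i, ∑ b, |p i b - q i b|
  | 0, A, p, q, _, _, _, _ => by simp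
  | n + 1, A, p, q, hp, hp1, hq, hq1 => by
    have ih := sum_abs_prod_sub_prod_le (fun i : Fin n => p i.succ) (fun i => q i.succ)
      (fun i => hp _) (fun i => hp1 _) (fun i => hq _) (fun i => hq1 _)
    have hone : ∑ a : ∀ i : Fin n, Fin (A i.succ), ∏ i, p i.succ (a i) = 1 := by
      rw [← Fintype.prod_sum]
      simp [hp1]
    rw [← (Fin.consEquiv (fun i => Fin (A i))).sum_comp, Fintype.sum_prod_type,
      Fin.sum_univ_succ]
    simp only [Fin.consEquiv, Equiv.coe_fn_mk, Fin.prod_univ_succ, Fin.cons_zero, Fin.cons_succ]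
    calc _ ≤ ∑ b : Fin (A 0), ∑ a : ∀ i : Fin n, Fin (A i.succ),
          (|p 0 b - q 0 b| * ∏ i, p i.succ (a i) +
            q 0 b * |∏ i, p i.succ (a i) - ∏ i, q i.succ (a i)|) := by
          refine sum_le_sum fun b _ => sum_le_sum fun a _ => ?_
          have hP : 0 ≤ ∏ i, p i.succ (a i) := prod_nonneg fun i _ => hp _ _
          -- Exchange the first factor, then all the remaining ones.
          have hsplit : p 0 b * ∏ i, p i.succ (a i) - q 0 b * ∏ i, q i.succ (a i) =
              (p 0 b - q 0 b) * ∏ i, p i.succ (a i) +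
                q 0 b * (∏ i, p i.succ (a i) - ∏ i, q i.succ (a i)) := by ring
          rw [hsplit]
          refine (abs_add_le _ _).trans_eq ?_
          rw [abs_mul, abs_mul, abs_of_nonneg hP, abs_of_nonneg (hq 0 b)]
      _ = ∑ b, |p 0 b - q 0 b| +
            ∑ a : ∀ i : Fin n, Fin (A i.succ),
              |∏ i, p i.succ (a i) - ∏ i, q i.succ (a i)| := by
          simp only [sum_add_distrib, ← mul_sum, ← sum_mul, hone, hq1, mul_one, one_mul]
      _ ≤ _ := by linarith

namespace SG

lemma sum_abs_jointProb_sub_le {n S : ℕ} {A : Fin n → ℕ} (π₁ π₂ : Profile n S A)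
    (h₁ : IsProfile π₁) (h₂ : IsProfile π₂) (δ : ℝ)
    (hδ : ∀ i s a, |π₁ i s a - π₂ i s a| ≤ δ) (hδ0 : 0 ≤ δ) (s : Fin S) :
    ∑ a, |jointProb π₁ s a - jointProb π₂ s a| ≤ n * Amax A * δ := by
  refine (sum_abs_prod_sub_prod_le (fun i => π₁ i s) (fun i => π₂ i s) (fun i => h₁.1 i s)
    (fun i => h₁.2 i s) (fun i => h₂.1 i s) (fun i => h₂.2 i s)).trans ?_
  have hagent : ∀ i : Fin n, ∑ b, |π₁ i s b - π₂ i s b| ≤ Amax A * δ := fun i => by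
    refine (sum_le_sum fun b _ => hδ i s b).trans ?_
    have hA : (A i : ℝ) ≤ Amax A := by
      exact_mod_cast Finset.le_sup (f := A) (mem_univ i)
    simpa using mul_le_mul_of_nonneg_right hA hδ0
  refine (sum_le_sum fun i _ => hagent i).trans_eq ?_
  simp [mul_assoc]

lemma sum_abs_Pmat_sub_le {n S : ℕ} {A : Fin n → ℕ} (g : SG n S A) (π₁ π₂ : Profile n S A)
    (s : Fin S) :
    ∑ s', |g.Pmat π₁ s s' - g.Pmat π₂ s s'| ≤ ∑ a, |jointProb π₁ s a - jointProb π₂ s a| := by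
  calc _ ≤ ∑ s', ∑ a, |jointProb π₁ s a - jointProb π₂ s a| * g.P s a s' := by
        refine sum_le_sum fun s' _ => ?_
        simp only [Pmat, ← sum_sub_distrib, ← sub_mul]
        refine (abs_sum_le_sum_abs _ _).trans_eq (sum_congr rfl fun a _ => ?_)
        rw [abs_mul, abs_of_nonneg (g.P_nonneg s a s')]
    _ = _ := by
        rw [sum_comm]
        simp only [← mul_sum, g.P_sum_one, mul_one]

lemma sum_abs_Pmat {n S : ℕ} {A : Fin n → ℕ} (g : SG n S A) (π : Profile n S A)
    (h : IsProfile π) (s : Fin S) : ∑ s', |g.Pmat π s s'| = 1 := by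
  have hnn : ∀ a, 0 ≤ jointProb π s a := fun a => prod_nonneg fun i _ => h.1 _ _ _
  have habs : ∀ s', |g.Pmat π s s'| = ∑ a, jointProb π s a * g.P s a s' := fun s' =>
    abs_of_nonneg (sum_nonneg fun a _ => mul_nonneg (hnn a) (g.P_nonneg s a s'))
  simp only [habs]
  rw [sum_comm]
  simp only [← mul_sum, g.P_sum_one, mul_one, jointProb]
  rw [← Fintype.prod_sum (fun i => π i s)]
  simp [h.2]

end SG

section LinftyOp

attribute [local instance] Matrix.linftyOpNormedRing Matrix.linftyOpNormedAlgebra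

lemma linfty_opNorm_le_of_row {S : ℕ} (M : Matrix (Fin S) (Fin S) ℝ) {c : ℝ} (hc : 0 ≤ c)
    (h : ∀ s, ∑ s', |M s s'| ≤ c) : ‖M‖ ≤ c := by
  lift c to NNReal using hc
  rw [Matrix.linfty_opNorm_def, NNReal.coe_le_coe]
  refine Finset.sup_le fun s _ => ?_
  rw [← NNReal.coe_le_coe]
  simpa using h s

lemma abs_entry_le_linfty_opNorm {S : ℕ} (M : Matrix (Fin S) (Fin S) ℝ) (s s' : Fin S) :
    |M s s'| ≤ ‖M‖ := by
  have hrow : ∑ t, ‖M s t‖₊ ≤ ‖M‖₊ := by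
    rw [Matrix.linfty_opNNNorm_def]
    exact Finset.le_sup (f := fun i => ∑ t, ‖M i t‖₊) (mem_univ s)
  have hentry : ‖M s s'‖₊ ≤ ‖M‖₊ :=
    (single_le_sum (f := fun t => ‖M s t‖₊) (fun _ _ => zero_le) (mem_univ s')).trans hrow
  exact_mod_cast hentry

/-- If `‖P‖ ≤ 1` in the `ℓ∞` operator norm and `0 ≤ γ < 1`, then
`I - γP` is invertible, with inverse of norm at most `1 / (1 - γ)`: the inverse `X` satisfies
`X = I + γPX`, hence `‖X‖ ≤ 1 + γ‖X‖`. -/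
lemma isUnit_and_norm_inv_le {S : ℕ} [Nonempty (Fin S)] (P : Matrix (Fin S) (Fin S) ℝ) {γ : ℝ}
    (h0 : 0 ≤ γ) (h1 : γ < 1) (hP : ‖P‖ ≤ 1) :
    IsUnit (1 - γ • P) ∧ ‖(1 - γ • P)⁻¹‖ ≤ 1 / (1 - γ) := by
  have hγP : ‖γ • P‖ ≤ γ := by
    rw [norm_smul, Real.norm_of_nonneg h0]
    exact mul_le_of_le_one_right h0 hP
  have : CompleteSpace (Matrix (Fin S) (Fin S) ℝ) := FiniteDimensional.complete ℝ _
  have hu : IsUnit (1 - γ • P) := isUnit_one_sub_of_norm_lt_one (hγP.trans_lt h1)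
  refine ⟨hu, ?_⟩
  set X := (1 - γ • P)⁻¹ with hX
  have hmul : (1 - γ • P) * X = 1 :=
    Matrix.mul_nonsing_inv _ ((Matrix.isUnit_iff_isUnit_det _).1 hu)
  have hfix : X = 1 + γ • P * X := by
    rw [← hmul]
    noncomm_ring
  have hle : ‖X‖ ≤ 1 + γ * ‖X‖ := by
    calc ‖X‖ = ‖1 + γ • P * X‖ := by rw [← hfix]
      _ ≤ ‖(1 : Matrix (Fin S) (Fin S) ℝ)‖ + ‖γ • P‖ * ‖X‖ :=
          (norm_add_le _ _).trans (add_le_add_right (norm_mul_le _ _) _)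
      _ ≤ 1 + γ * ‖X‖ := by
          rw [norm_one]
          gcongr
  rw [le_div_iff₀ (by linarith)]
  linarith

open SG in
/-- The `ℓ∞` operator norm estimate, which the entrywise bound weakens by the factor `S ≥ 1`. -/
lemma norm_inv_sub_inv_le {n S : ℕ} {A : Fin n → ℕ} [Nonempty (Fin S)] (g : SG n S A)
    (π₁ π₂ : Profile n S A) (h₁ : IsProfile π₁) (h₂ : IsProfile π₂)
    {δ : ℝ} (hδ : ∀ i s a, |π₁ i s a - π₂ i s a| ≤ δ) (hδ0 : 0 ≤ δ) :
    ‖(1 - g.γ • g.Pmat π₁)⁻¹ - (1 - g.γ • g.Pmat π₂)⁻¹‖ ≤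
      n * Amax A * δ / (1 - g.γ) ^ 2 := by
  have hγ0 := g.γ_nonneg
  have hγ1 := g.γ_lt_one
  have hpos : 0 < 1 - g.γ := by linarith
  obtain ⟨hu₁, hX₁⟩ := isUnit_and_norm_inv_le (g.Pmat π₁) hγ0 hγ1
    (linfty_opNorm_le_of_row _ zero_le_one fun s => (g.sum_abs_Pmat π₁ h₁ s).le)
  obtain ⟨hu₂, hX₂⟩ := isUnit_and_norm_inv_le (g.Pmat π₂) hγ0 hγ1
    (linfty_opNorm_le_of_row _ zero_le_one fun s => (g.sum_abs_Pmat π₂ h₂ s).le)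
  have hdiff : ‖g.Pmat π₁ - g.Pmat π₂‖ ≤ n * Amax A * δ :=
    linfty_opNorm_le_of_row _ (by positivity) fun s =>
      (g.sum_abs_Pmat_sub_le π₁ π₂ s).trans (sum_abs_jointProb_sub_le π₁ π₂ h₁ h₂ δ hδ hδ0 s)
  have hscaled : ‖g.γ • (g.Pmat π₁ - g.Pmat π₂)‖ ≤ n * Amax A * δ := by
    rw [norm_smul, Real.norm_of_nonneg hγ0]
    exact (mul_le_of_le_one_left (norm_nonneg _) hγ1.le).trans hdiff
  have hresolvent : (1 - g.γ • g.Pmat π₁)⁻¹ - (1 - g.γ • g.Pmat π₂)⁻¹ =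
      (1 - g.γ • g.Pmat π₁)⁻¹ * (g.γ • (g.Pmat π₁ - g.Pmat π₂)) *
        (1 - g.γ • g.Pmat π₂)⁻¹ := by
    rw [Matrix.inv_sub_inv (iff_of_true hu₁ hu₂)]
    congr 2
    rw [smul_sub]
    abel
  rw [hresolvent]
  calc _ ≤ 1 / (1 - g.γ) * (n * Amax A * δ) * (1 / (1 - g.γ)) := by
        refine (norm_mul_le _ _).trans (mul_le_mul ((norm_mul_le _ _).trans
          (mul_le_mul hX₁ hscaled (norm_nonneg _) (by positivity))) hX₂ (norm_nonneg _)
          (by positivity))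
    _ = _ := by field_simp

end LinftyOp

open SG in
/-- entrywise bound on the difference of the matrices `(I − γP^π)⁻¹`. -/
theorem inv_matrix_entry_diff_le {n S : ℕ} {A : Fin n → ℕ} (g : SG n S A)
    (π₁ π₂ : Profile n S A) (h₁ : IsProfile π₁) (h₂ : IsProfile π₂)
    (δ : ℝ) (hδ : ∀ i s a, |π₁ i s a - π₂ i s a| ≤ δ) :
    ∀ s s' : Fin S,
      |(1 - g.γ • g.Pmat π₁)⁻¹ s s' - (1 - g.γ • g.Pmat π₂)⁻¹ s s'| ≤
        (n : ℝ) * (S : ℝ) * (Amax A : ℝ) * δ / (1 - g.γ) ^ 2 := by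
  intro s s'
  have : Nonempty (Fin S) := ⟨s⟩
  -- Without agents `δ` may be negative, but then the two profiles coincide.
  rcases Nat.eq_zero_or_pos n with rfl | hn
  · obtain rfl : π₁ = π₂ := Subsingleton.elim _ _
    simp
  have hδ0 : 0 ≤ δ := by
    -- A probability distribution lives on a nonempty type, so agent `0` has an action.
    have hne : (univ : Finset (Fin (A ⟨0, hn⟩))).Nonempty := by
      by_contra hempty
      have hsum := h₁.2 ⟨0, hn⟩ s
      rw [not_nonempty_iff_eq_empty.1 hempty] at hsum
      simp at hsum
    obtain ⟨b, -⟩ := hne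
    exact (abs_nonneg _).trans (hδ ⟨0, hn⟩ s b)
  have hS : (1 : ℝ) ≤ S := by exact_mod_cast Nat.one_le_iff_ne_zero.2 (Fin.pos s).ne'
  rw [← Matrix.sub_apply]
  refine ((abs_entry_le_linfty_opNorm _ s s').trans
    (norm_inv_sub_inv_le g π₁ π₂ h₁ h₂ hδ hδ0)).trans ?_
  have hbase : 0 ≤ (n : ℝ) * Amax A * δ := by positivity
  refine div_le_div_of_nonneg_right ?_ (sq_nonneg _)
  nlinarith
end
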